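/- Let r > 0 be a real number, let f : ℝ → ℝ be measurable and bounded on [0, ∞), and let s > 0 be real. Then ∫_0^∞ e^{−st} [ (1/Γ(r)) ∫_0^t (t − τ)^{r−1} f(τ) dτ ] dt = s^{−r} · ∫_0^∞ e^{−st} f(t) dt. (Laplace transform rule for the fractional integral: L{I^r f}(s) = s^{−r} F(s), the zero-initial-condition case of the Laplace transform formula for fractional differintegrals.) -/

import Mathlib

open Real Set MeasureTheory intervalIntegral

/-!
Since `exp (-(s * t)) = exp (-(s * τ)) * exp (-(s * (t - τ)))`, the Laplace transform turns
convolution on the half-line into multiplication. The Riemann–Liouville integral of order `r` is the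
convolution with the kernel `t ^ (r - 1) / Γ(r)`, whose transform is `s ^ (-r)` by Euler's integral
for `Γ(r)`.
-/

section LaplaceTransform

variable {E F G : Type*} [NormedAddCommGroup E] [NormedSpace ℝ E]
  [NormedAddCommGroup F] [NormedSpace ℝ F] [NormedAddCommGroup G] [NormedSpace ℝ G]

/-- Absolute convergence at the real point `s` of the integral defining the Laplace transform
of `f`. -/
def LaplaceConvergent (f : ℝ → E) (s : ℝ) : Prop :=
  IntegrableOn (fun t ↦ exp (-(s * t)) • f t) (Ioi 0)

/-- The one-sided Laplace transform of a vector-valued function at the real point `s`. It has the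
junk value `0` where the integral does not converge absolutely. -/
noncomputable def laplaceTransform (f : ℝ → E) (s : ℝ) : E :=
  ∫ t in Ioi 0, exp (-(s * t)) • f t

theorem laplaceConvergent_of_ae_norm_le {f : ℝ → E} {s C : ℝ} (hs : 0 < s)
    (hf : AEStronglyMeasurable f (volume.restrict (Ioi 0)))
    (hC : ∀ᵐ t ∂volume.restrict (Ioi 0), ‖f t‖ ≤ C) : LaplaceConvergent f s := by
  have hexp : IntegrableOn (fun t ↦ exp (-(s * t))) (Ioi 0) := by
    simpa only [neg_mul] using integrableOn_exp_mul_Ioi (neg_lt_zero.mpr hs) 0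
  exact hexp.smul_bdd C hf hC

theorem laplaceTransform_const_smul {𝕜 : Type*} [NormedDivisionRing 𝕜] [Module 𝕜 E]
    [NormSMulClass 𝕜 E] [SMulCommClass ℝ 𝕜 E] (c : 𝕜) (f : ℝ → E) (s : ℝ) :
    laplaceTransform (fun t ↦ c • f t) s = c • laplaceTransform f s := by
  simp only [laplaceTransform, smul_comm _ c, MeasureTheory.integral_smul]

theorem laplaceTransform_convolution [CompleteSpace E] [CompleteSpace F] [CompleteSpace G]
    (L : E →L[ℝ] F →L[ℝ] G) {f : ℝ → E} {g : ℝ → F} {s : ℝ}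
    (hf : LaplaceConvergent f s) (hg : LaplaceConvergent g s) :
    laplaceTransform (fun t ↦ ∫ τ in 0..t, L (f τ) (g (t - τ))) s =
      L (laplaceTransform f s) (laplaceTransform g s) := by
  have exp_smul_apply (t τ : ℝ) :
      exp (-(s * t)) • L (f τ) (g (t - τ)) =
        L (exp (-(s * τ)) • f τ) (exp (-(s * (t - τ))) • g (t - τ)) := by
    have exp_split : exp (-(s * t)) = exp (-(s * (t - τ))) * exp (-(s * τ)) := by
      rw [← exp_add]
      ring_nf
    rw [exp_split, map_smul, map_smul, smul_apply, smul_smul]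
  simp only [laplaceTransform, ← intervalIntegral.integral_smul, exp_smul_apply]
  exact integral_posConvolution hf hg L

theorem laplaceConvergent_rpow {a s : ℝ} (ha : -1 < a) (hs : 0 < s) :
    LaplaceConvergent (fun t ↦ t ^ a) s := by
  simpa only [LaplaceConvergent, smul_eq_mul, rpow_one, neg_mul, mul_neg, mul_comm] using
    integrableOn_rpow_mul_exp_neg_mul_rpow ha one_pos hs

theorem laplaceTransform_rpow {a s : ℝ} (ha : -1 < a) (hs : 0 < s) :
    laplaceTransform (fun t ↦ t ^ a) s = s ^ (-(a + 1)) * Gamma (a + 1) := by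
  have euler := integral_rpow_mul_exp_neg_mul_Ioi (neg_lt_iff_pos_add.mp ha) hs
  simpa only [laplaceTransform, smul_eq_mul, mul_comm, add_sub_cancel_right, one_div,
    inv_rpow hs.le, ← rpow_neg hs.le] using euler

/-- The Riemann–Liouville fractional integral of order `r > 0` with lower terminal `0`, meaningful
for `t ≥ 0`; at `t < 0` the interval integral gives a junk value. -/
noncomputable def riemannLiouvilleIntegral (r : ℝ) (f : ℝ → E) (t : ℝ) : E :=
  (1 / Gamma r) • ∫ τ in 0..t, (t - τ) ^ (r - 1) • f τ

theorem laplace_fractional_integral_general [CompleteSpace E] {r s : ℝ} (hr : 0 < r) (hs : 0 < s)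
    {f : ℝ → E} (hf : LaplaceConvergent f s) :
    laplaceTransform (riemannLiouvilleIntegral r f) s = s ^ (-r) • laplaceTransform f s := by
  have neg_one_lt : -1 < r - 1 := by linarith
  calc laplaceTransform (riemannLiouvilleIntegral r f) s
    _ = (1 / Gamma r) • laplaceTransform (fun t ↦ ∫ τ in 0..t, (t - τ) ^ (r - 1) • f τ) s :=
      laplaceTransform_const_smul _ _ s
    _ = (1 / Gamma r) • laplaceTransform (fun t ↦ t ^ (r - 1)) s • laplaceTransform f s :=
      congrArg _ <| laplaceTransform_convolution (ContinuousLinearMap.lsmul ℝ ℝ).flip hf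
        (laplaceConvergent_rpow neg_one_lt hs)
    _ = s ^ (-r) • laplaceTransform f s := by
      rw [laplaceTransform_rpow neg_one_lt hs, sub_add_cancel, smul_smul, one_div_mul_eq_div,
        mul_div_cancel_right₀ _ (Gamma_pos_of_pos hr).ne']

end LaplaceTransform

/-- Laplace transform rule for the Riemann–Liouville fractional integral:
for `r > 0`, `f` measurable and bounded on `[0, ∞)` and real `s > 0`,
`L{I^r f}(s) = s^{-r} F(s)`. -/
theorem laplace_fractional_integral (r : ℝ) (hr : 0 < r) (f : ℝ → ℝ)
    (hmeas : Measurable f) (hbdd : ∃ C : ℝ, ∀ t ≥ (0 : ℝ), |f t| ≤ C)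
    (s : ℝ) (hs : 0 < s) :
    ∫ t in Ioi (0 : ℝ), Real.exp (-(s * t)) *
        ((1 / Real.Gamma r) * ∫ τ in (0 : ℝ)..t, (t - τ) ^ (r - 1) * f τ) =
      s ^ (-r) * ∫ t in Ioi (0 : ℝ), Real.exp (-(s * t)) * f t := by
  obtain ⟨C, hC⟩ := hbdd
  exact laplace_fractional_integral_general hr hs <|
    laplaceConvergent_of_ae_norm_le hs hmeas.aestronglyMeasurable <|
      ae_restrict_of_forall_mem measurableSet_Ioi fun t ht ↦ hC t (le_of_lt ht)
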